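/- arXiv:1907.12243 — 3 statements merged into one kernel-verified Lean document; each statement's English description precedes it below -/
import Mathlib

section
/- Recurrence relation for the associated polynomials: for every k ≥ 0 and every n ≥ 2d − 1, ρ(z) · S_n^{[k]}(z) = Σ_{j=n−d}^{n+d} 𝔞_{n+k, j+k} · S_j^{[k]}(z) holds identically in z, where 𝔞_{n+k, j+k} = ⟨S_{n+k}, ρ S_{j+k}⟩ / ⟨S_{j+k}, S_{j+k}⟩ and d = deg ρ. -/
open MeasureTheory Polynomial Filter
open scoped Classical

noncomputable section

/-- The discrete Sobolev inner product with a single derivative order `d j` at each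
mass point `c j`, with weight `η j`. -/
def sobInner (μ : Measure ℝ) {N : ℕ} (c : Fin N → ℝ) (d : Fin N → ℕ) (η : Fin N → ℝ)
    (f g : Polynomial ℝ) : ℝ :=
  (∫ x in Set.Icc (-1:ℝ) 1, f.eval x * g.eval x ∂μ) +
    ∑ j, η j * ((derivative^[d j] f).eval (c j)) * ((derivative^[d j] g).eval (c j))

/-- The general discrete Sobolev inner product with weights `η j i` for the `i`-th
derivatives, `0 ≤ i ≤ d j`, at each mass point `c j`. -/
def sobInner2 (μ : Measure ℝ) {N : ℕ} (c : Fin N → ℝ) (d : Fin N → ℕ) (η : Fin N → ℕ → ℝ)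
    (f g : Polynomial ℝ) : ℝ :=
  (∫ x in Set.Icc (-1:ℝ) 1, f.eval x * g.eval x ∂μ) +
    ∑ j, ∑ i ∈ Finset.range (d j + 1),
      η j i * ((derivative^[i] f).eval (c j)) * ((derivative^[i] g).eval (c j))

/-- Sequential order for the data of a discrete Sobolev inner product:
`d` is nondecreasing and each `c k` lies outside the convex hull of
`(-1,1) ∪ {c 1, …, c (k-1)}`. -/
def SeqOrdered {N : ℕ} (c : Fin N → ℝ) (d : Fin N → ℕ) : Prop :=
  (∀ i j : Fin N, i ≤ j → d i ≤ d j) ∧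
    ∀ k : Fin N, c k ∉ convexHull ℝ (Set.Ioo (-1:ℝ) 1 ∪ c '' {j : Fin N | j < k})

/-- The polynomial ρ(x) = ∏_{c j < -1} (x - c j)^(d j + 1) · ∏_{c j > 1} (c j - x)^(d j + 1). -/
def rhoPoly {N : ℕ} (c : Fin N → ℝ) (d : Fin N → ℕ) : Polynomial ℝ :=
  (∏ j ∈ Finset.univ.filter (fun j => c j < -1), (X - C (c j)) ^ (d j + 1)) *
    ∏ j ∈ Finset.univ.filter (fun j => (1:ℝ) < c j), (C (c j) - X) ^ (d j + 1)

/-- ν = number of mass points greater than 1. -/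
def nuCount {N : ℕ} (c : Fin N → ℝ) : ℕ :=
  (Finset.univ.filter (fun j : Fin N => (1:ℝ) < c j)).card

/-- μ belongs to the Nevai class M(0,1): supp μ = [-1,1] and the monic orthogonal
polynomials of μ satisfy a three-term recurrence with aₙ → 1/2 and bₙ → 0. -/
def NevaiClass (μ : Measure ℝ) : Prop :=
  μ (Set.Icc (-1:ℝ) 1)ᶜ = 0 ∧
  (∀ x ∈ Set.Icc (-1:ℝ) 1, ∀ ε > 0, 0 < μ (Metric.ball x ε)) ∧
  ∃ (P : ℕ → Polynomial ℝ) (a b : ℕ → ℝ),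
    (∀ n, (P n).Monic) ∧ (∀ n, (P n).natDegree = n) ∧
    (∀ n, ∀ m < n, (∫ x in Set.Icc (-1:ℝ) 1, x ^ m * (P n).eval x ∂μ) = 0) ∧
    P 0 = 1 ∧ P 1 = X - C (b 0) ∧
    (∀ n, P (n + 2) = (X - C (b (n + 1))) * P (n + 1) - C ((a (n + 1)) ^ 2) * P n) ∧
    Tendsto a atTop (nhds (1 / 2)) ∧ Tendsto b atTop (nhds 0)

/-- The segment [-1,1] regarded as a subset of ℂ. -/
def segIcc : Set ℂ := Complex.ofReal '' Set.Icc (-1:ℝ) 1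

/-- Markov-type function: z ↦ ∫ q(x) / (z - x) w(x) dμ(x). -/
def markovHat (μ : Measure ℝ) (w q : Polynomial ℝ) (z : ℂ) : ℂ :=
  ∫ x in Set.Icc (-1:ℝ) 1, ((q.eval x * w.eval x : ℝ) : ℂ) / (z - (x : ℂ)) ∂μ

/-- Associated function: z ↦ ∫ (p(z) - p(x)) / (z - x) · q(x) w(x) dμ(x). -/
def assocFun (μ : Measure ℝ) (w q p : Polynomial ℝ) (z : ℂ) : ℂ :=
  ∫ x in Set.Icc (-1:ℝ) 1,
    ((aeval z p - ((p.eval x : ℝ) : ℂ)) / (z - (x : ℂ))) * ((q.eval x * w.eval x : ℝ) : ℂ) ∂μ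

/-- A function changes sign at `t` if arbitrarily close to `t`, on the left and right,
it takes values of opposite signs. -/
def SignChangeAt (p : Polynomial ℝ) (t : ℝ) : Prop :=
  ∀ δ > 0, ∃ x ∈ Set.Ioo (t - δ) t, ∃ y ∈ Set.Ioo t (t + δ), p.eval x * p.eval y < 0

/-- N₀(f; A): number of zeros of `f` in `A`, counted with multiplicity. -/
def N0 (f : Polynomial ℝ) (A : Set ℝ) : ℕ :=
  (f.roots.filter (fun x => x ∈ A)).card

lemma pint (μ : Measure ℝ) [IsFiniteMeasure μ] (p : Polynomial ℝ) :
    IntegrableOn (fun x => p.eval x) (Set.Icc (-1:ℝ) 1) μ :=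
  p.continuous.continuousOn.integrableOn_compact isCompact_Icc

/-- Integration of polynomials. -/
def Lint (μ : Measure ℝ) [IsFiniteMeasure μ] : Polynomial ℝ →ₗ[ℝ] ℝ where
  toFun p := ∫ x in Set.Icc (-1:ℝ) 1, p.eval x ∂μ
  map_add' p q := by
    simp only [eval_add]
    exact integral_add (pint μ p) (pint μ q)
  map_smul' a p := by
    simp only [eval_smul, smul_eq_mul, RingHom.id_apply]
    exact integral_const_mul _ _

lemma Lint_apply (μ : Measure ℝ) [IsFiniteMeasure μ] (p : Polynomial ℝ) :
    Lint μ p = ∫ x in Set.Icc (-1:ℝ) 1, p.eval x ∂μ := rfl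

lemma sob_eq (μ : Measure ℝ) [IsFiniteMeasure μ] {N : ℕ} (c : Fin N → ℝ) (d : Fin N → ℕ)
    (η : Fin N → ℕ → ℝ) (f g : Polynomial ℝ) :
    sobInner2 μ c d η f g = Lint μ (f * g) + ∑ j, ∑ i ∈ Finset.range (d j + 1),
      η j i * ((derivative^[i] f).eval (c j)) * ((derivative^[i] g).eval (c j)) := by
  simp only [sobInner2, Lint_apply, eval_mul]

lemma sob_comm (μ : Measure ℝ) [IsFiniteMeasure μ] {N : ℕ} (c : Fin N → ℝ) (d : Fin N → ℕ)
    (η : Fin N → ℕ → ℝ) (f g : Polynomial ℝ) :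
    sobInner2 μ c d η f g = sobInner2 μ c d η g f := by
  rw [sob_eq, sob_eq, mul_comm f g]
  congr 1
  refine Finset.sum_congr rfl fun j _ => Finset.sum_congr rfl fun i _ => ?_
  ring

/-- The inner product, linear in the first argument. -/
def sobL (μ : Measure ℝ) [IsFiniteMeasure μ] {N : ℕ} (c : Fin N → ℝ) (d : Fin N → ℕ)
    (η : Fin N → ℕ → ℝ) (g : Polynomial ℝ) : Polynomial ℝ →ₗ[ℝ] ℝ where
  toFun f := sobInner2 μ c d η f g
  map_add' p q := by
    simp only [sob_eq, add_mul, map_add, iterate_map_add, eval_add, mul_add,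
      Finset.sum_add_distrib]
    ring
  map_smul' a p := by
    simp only [sob_eq, smul_mul_assoc, map_smul, iterate_derivative_smul, eval_smul,
      smul_eq_mul, RingHom.id_apply, mul_add, Finset.mul_sum]
    congr 1
    refine Finset.sum_congr rfl fun j _ => Finset.sum_congr rfl fun i _ => ?_
    ring

lemma sobL_apply (μ : Measure ℝ) [IsFiniteMeasure μ] {N : ℕ} (c : Fin N → ℝ) (d : Fin N → ℕ)
    (η : Fin N → ℕ → ℝ) (f g : Polynomial ℝ) :
    sobL μ c d η g f = sobInner2 μ c d η f g := rfl

lemma rho_dvd {N : ℕ} (c : Fin N → ℝ) (d : Fin N → ℕ)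
    (hc : ∀ j, c j ∉ Set.Icc (-1:ℝ) 1) (j : Fin N) :
    (X - C (c j)) ^ (d j + 1) ∣ rhoPoly c d := by
  by_cases h : c j < -1
  · refine Dvd.dvd.mul_right ?_ _
    exact Finset.dvd_prod_of_mem (fun j => (X - C (c j)) ^ (d j + 1)) (by simp [h])
  · have h1 : 1 < c j := by
      by_contra h2
      exact hc j ⟨by linarith, by linarith⟩
    refine Dvd.dvd.mul_left ?_ _
    refine Dvd.dvd.trans ?_
      (Finset.dvd_prod_of_mem (fun j => (C (c j) - X) ^ (d j + 1)) (a := j) (by simp [h1]))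
    exact pow_dvd_pow_of_dvd ⟨-1, by ring⟩ _

lemma rho_deg {N : ℕ} (c : Fin N → ℝ) (d : Fin N → ℕ) :
    (rhoPoly c d).natDegree ≤ N + ∑ j, d j := by
  have hN : N + ∑ j, d j = ∑ j : Fin N, (d j + 1) := by
    simp [Finset.sum_add_distrib, add_comm]
  have hd : Disjoint (Finset.univ.filter (fun j : Fin N => c j < -1))
      (Finset.univ.filter (fun j : Fin N => 1 < c j)) := by
    rw [Finset.disjoint_filter]
    intro j _ h
    linarith
  rw [hN]
  calc _ ≤ _ := natDegree_mul_le
    _ ≤ (∑ j ∈ Finset.univ.filter (fun j : Fin N => c j < -1), (d j + 1)) +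
        ∑ j ∈ Finset.univ.filter (fun j : Fin N => 1 < c j), (d j + 1) := by
      refine add_le_add ?_ ?_
      · refine (natDegree_prod_le _ _).trans (Finset.sum_le_sum fun j _ => ?_)
        rw [natDegree_pow, natDegree_X_sub_C, mul_one]
      · refine (natDegree_prod_le _ _).trans (Finset.sum_le_sum fun j _ => ?_)
        rw [natDegree_pow]
        have : (C (c j) - X : Polynomial ℝ).natDegree ≤ 1 := by compute_degree
        simpa using Nat.mul_le_mul_left (d j + 1) this
    _ = ∑ j ∈ (Finset.univ.filter (fun j : Fin N => c j < -1)) ∪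
        (Finset.univ.filter (fun j : Fin N => 1 < c j)), (d j + 1) :=
      (Finset.sum_union hd).symm
    _ ≤ _ := Finset.sum_le_sum_of_subset (Finset.subset_univ _)

lemma rho_der {N : ℕ} (c : Fin N → ℝ) (d : Fin N → ℕ)
    (hc : ∀ j, c j ∉ Set.Icc (-1:ℝ) 1) (j : Fin N) (i : ℕ) (hi : i < d j + 1)
    (f : Polynomial ℝ) : (derivative^[i] (rhoPoly c d * f)).eval (c j) = 0 := by
  by_cases h0 : rhoPoly c d * f = 0
  · simp [h0]
  · refine isRoot_iterate_derivative_of_lt_rootMultiplicity (lt_of_lt_of_le hi ?_)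
    rw [le_rootMultiplicity_iff h0]
    exact (rho_dvd c d hc j).mul_right f

lemma sob_rho (μ : Measure ℝ) [IsFiniteMeasure μ] {N : ℕ} (c : Fin N → ℝ) (d : Fin N → ℕ)
    (hc : ∀ j, c j ∉ Set.Icc (-1:ℝ) 1) (η : Fin N → ℕ → ℝ) (f g : Polynomial ℝ) :
    sobInner2 μ c d η f (rhoPoly c d * g) = Lint μ (f * (rhoPoly c d * g)) := by
  rw [sob_eq, add_eq_left]
  refine Finset.sum_eq_zero fun j _ => Finset.sum_eq_zero fun i hi => ?_
  rw [rho_der c d hc j i (Finset.mem_range.1 hi), mul_zero]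

lemma sob_rho_symm (μ : Measure ℝ) [IsFiniteMeasure μ] {N : ℕ} (c : Fin N → ℝ) (d : Fin N → ℕ)
    (hc : ∀ j, c j ∉ Set.Icc (-1:ℝ) 1) (η : Fin N → ℕ → ℝ) (f g : Polynomial ℝ) :
    sobInner2 μ c d η (rhoPoly c d * f) g = sobInner2 μ c d η f (rhoPoly c d * g) := by
  rw [sob_comm, sob_rho μ c d hc, sob_rho μ c d hc]
  congr 1
  ring

lemma sob_orth (μ : Measure ℝ) [IsFiniteMeasure μ] {N : ℕ} (c : Fin N → ℝ) (d : Fin N → ℕ)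
    (η : Fin N → ℕ → ℝ) (n : ℕ) (s f : Polynomial ℝ)
    (hs : ∀ m < n, sobInner2 μ c d η (X ^ m) s = 0) (hf : f.degree < n) :
    sobInner2 μ c d η f s = 0 := by
  by_cases hf0 : f = 0
  · rw [← sobL_apply, hf0, map_zero]
  have hf' : f.natDegree < n := (natDegree_lt_iff_degree_lt hf0).2 hf
  rw [← sobL_apply, as_sum_range_C_mul_X_pow' f hf', map_sum]
  refine Finset.sum_eq_zero fun m hm => ?_
  rw [← smul_eq_C_mul, map_smul, sobL_apply, hs m (Finset.mem_range.1 hm), smul_zero]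

lemma sob_expand (μ : Measure ℝ) [IsFiniteMeasure μ] {N : ℕ} (c : Fin N → ℝ) (d : Fin N → ℕ)
    (η : Fin N → ℕ → ℝ) (S : ℕ → Polynomial ℝ)
    (hSmonic : ∀ n, (S n).Monic) (hSdeg : ∀ n, (S n).natDegree = n)
    (hSorth : ∀ n, ∀ m < n, sobInner2 μ c d η (X ^ m) (S n) = 0)
    (hpos : ∀ n, sobInner2 μ c d η (S n) (S n) ≠ 0) (m : ℕ) :
    ∀ p : Polynomial ℝ, p.degree < m → p = ∑ j ∈ Finset.range m,
      (sobInner2 μ c d η p (S j) / sobInner2 μ c d η (S j) (S j)) • S j := by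
  have hSd : ∀ n, (S n).degree = n := fun n => by
    rw [degree_eq_natDegree (hSmonic n).ne_zero, hSdeg]
  induction m with
  | zero =>
    intro p hp
    simpa using hp
  | succ m ih =>
    intro p hp
    set q := p - p.coeff m • S m with hq
    have hqd : q.degree < m := by
      rw [degree_lt_iff_coeff_zero]
      intro k hk
      rcases hk.eq_or_lt with rfl | hk
      · have : (S m).coeff m = 1 := by
          have := hSmonic m
          rwa [Monic, leadingCoeff, hSdeg] at this
        simp [hq, this]
      · have h1 : p.coeff k = 0 := (degree_lt_iff_coeff_zero _ _).1 hp k hk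
        have h2 : (S m).coeff k = 0 := coeff_eq_zero_of_natDegree_lt (by rw [hSdeg]; exact hk)
        simp [hq, h1, h2]
    have hpq : p = q + p.coeff m • S m := by simp [hq]
    have hB : ∀ s, sobInner2 μ c d η p s =
        sobInner2 μ c d η q s + p.coeff m * sobInner2 μ c d η (S m) s := by
      intro s
      rw [← sobL_apply, ← sobL_apply, ← sobL_apply]
      conv_lhs => rw [hpq]
      rw [map_add, map_smul, smul_eq_mul]
    have hm : sobInner2 μ c d η p (S m) / sobInner2 μ c d η (S m) (S m) = p.coeff m := by
      rw [hB, sob_orth μ c d η m (S m) q (hSorth m) hqd, zero_add,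
        mul_div_cancel_right₀ _ (hpos m)]
    rw [Finset.sum_range_succ, hm]
    conv_lhs => rw [hpq, ih q hqd]
    congr 1
    refine Finset.sum_congr rfl fun j hj => ?_
    have hj := Finset.mem_range.1 hj
    rw [hB (S j), sob_comm μ c d η (S m) (S j),
      sob_orth μ c d η m (S m) (S j) (hSorth m) (by rw [hSd]; exact_mod_cast hj),
      mul_zero, add_zero]

/-- Difference quotient. -/
def DQ (z : ℝ) (p : Polynomial ℝ) : Polynomial ℝ := p /ₘ (X - C z)

lemma DQ_eval (z : ℝ) (p : Polynomial ℝ) (x : ℝ) :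
    p.eval z - p.eval x = (z - x) * (DQ z p).eval x := by
  have h := X_sub_C_mul_divByMonic_eq_sub_modByMonic p z
  rw [modByMonic_X_sub_C_eq_C_eval] at h
  have := congrArg (eval x) h
  simp only [eval_mul, eval_sub, eval_X, eval_C] at this
  rw [DQ]
  linarith

/-- The `2d+1`-term recurrence relation
`ρ(z) S_n^{[k]}(z) = ∑_{j=n-d}^{n+d} 𝔞_{n+k,j+k} S_j^{[k]}(z)` for `n ≥ 2d - 1`. -/
theorem statement6
    (μ : Measure ℝ) [IsFiniteMeasure μ]
    (hμsupp : μ (Set.Icc (-1:ℝ) 1)ᶜ = 0)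
    (hμinf : ∀ p : Polynomial ℝ, p ≠ 0 → 0 < ∫ x in Set.Icc (-1:ℝ) 1, (p.eval x) ^ 2 ∂μ)
    {N : ℕ} (c : Fin N → ℝ) (d : Fin N → ℕ)
    (hc : ∀ j, c j ∉ Set.Icc (-1:ℝ) 1)
    (η : Fin N → ℕ → ℝ) (hη : ∀ j i, i ≤ d j → 0 ≤ η j i) (hηd : ∀ j, 0 < η j (d j))
    (S : ℕ → Polynomial ℝ)
    (hSmonic : ∀ n, (S n).Monic) (hSdeg : ∀ n, (S n).natDegree = n)
    (hSorth : ∀ n, ∀ m < n, sobInner2 μ c d η (X ^ m) (S n) = 0)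
    (Q : ℕ → Polynomial ℝ)
    (hQmonic : ∀ n, (Q n).Monic) (hQdeg : ∀ n, (Q n).natDegree = n)
    (hQorth : ∀ n, ∀ m < n,
      (∫ x in Set.Icc (-1:ℝ) 1, x ^ m * (Q n).eval x * (rhoPoly c d).eval x ∂μ) = 0)
    (Sk : ℕ → ℕ → ℝ → ℝ)
    (hSk0 : ∀ n z, Sk 0 n z = (S n).eval z)
    (hSkS : ∀ k n z, Sk (k + 1) n z =
      ∫ x in Set.Icc (-1:ℝ) 1,
        (((S (n + k + 1)).eval z - (S (n + k + 1)).eval x) / (z - x)) *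
          ((Q k).eval x * (rhoPoly c d).eval x) ∂μ)
    (k n : ℕ) (hn : 2 * (N + ∑ j, d j) ≤ n + 1) :
    ∀ z : ℝ, z ∉ Set.Icc (-1:ℝ) 1 →
      (rhoPoly c d).eval z * Sk k n z =
        ∑ j ∈ Finset.Icc (n - (N + ∑ j, d j)) (n + (N + ∑ j, d j)),
          (sobInner2 μ c d η (S (n + k)) (rhoPoly c d * S (j + k)) /
              sobInner2 μ c d η (S (j + k)) (S (j + k))) * Sk k j z := by
  intro z hz
  set D := N + ∑ j, d j with hD
  set ρ := rhoPoly c d with hρ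
  have hρd : ρ.natDegree ≤ D := rho_deg c d
  have hpos : ∀ n, sobInner2 μ c d η (S n) (S n) ≠ 0 := by
    intro n
    have h1 := hμinf (S n) (hSmonic n).ne_zero
    have h2 : 0 ≤ ∑ j, ∑ i ∈ Finset.range (d j + 1),
        η j i * ((derivative^[i] (S n)).eval (c j)) * ((derivative^[i] (S n)).eval (c j)) := by
      refine Finset.sum_nonneg fun j _ => Finset.sum_nonneg fun i hi => ?_
      rw [mul_assoc]
      exact mul_nonneg (hη j i (Nat.lt_succ_iff.1 (Finset.mem_range.1 hi))) (mul_self_nonneg _)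
    simp only [pow_two] at h1
    unfold sobInner2
    linarith
  have hDn : D ≤ n := by omega
  have hdeg : ∀ f : Polynomial ℝ, ∀ m, f.natDegree < m → f.degree < m := fun f m h =>
    lt_of_le_of_lt degree_le_natDegree (by exact_mod_cast h)
  have hexp : ρ * S (n + k) = ∑ j ∈ Finset.Icc (n - D) (n + D),
      (sobInner2 μ c d η (S (n + k)) (ρ * S (j + k)) /
        sobInner2 μ c d η (S (j + k)) (S (j + k))) • S (j + k) := by
    have h := sob_expand μ c d η S hSmonic hSdeg hSorth hpos (n + D + k + 1) (ρ * S (n + k))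
      (hdeg _ _ (by
        have := natDegree_mul_le (p := ρ) (q := S (n + k))
        rw [hSdeg] at this
        omega))
    rw [h]
    simp only [hρ, sob_rho_symm μ c d hc]
    rw [← Finset.sum_image (s := Finset.Icc (n - D) (n + D)) (g := fun j => j + k)
      (f := fun i => (sobInner2 μ c d η (S (n + k)) (rhoPoly c d * S i) /
        sobInner2 μ c d η (S i) (S i)) • S i) (by intro a _ b _ h; simpa using h)]
    symm
    refine Finset.sum_subset ?_ ?_
    · intro i hi
      simp only [Finset.mem_image, Finset.mem_Icc, Finset.mem_range] at hi ⊢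
      omega
    · intro i hi hi2
      have hlt : i + D < n + k := by
        by_contra hcon
        apply hi2
        simp only [Finset.mem_image, Finset.mem_Icc, Finset.mem_range] at hi ⊢
        exact ⟨i - k, by omega, by omega⟩
      rw [sob_comm, sob_orth μ c d η (n + k) (S (n + k)) _ (hSorth _) (hdeg _ _ (by
        have := natDegree_mul_le (p := ρ) (q := S i)
        rw [hSdeg] at this
        rw [← hρ]
        omega)), zero_div, zero_smul]
  cases k with
  | zero =>
    have h := congrArg (eval z) hexp
    simp only [eval_finsetSum, eval_mul, eval_smul, smul_eq_mul, add_zero] at h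
    simpa only [hSk0, add_zero] using h
  | succ k =>
    have hxz : ∀ x ∈ Set.Icc (-1:ℝ) 1, z - x ≠ 0 := by
      intro x hx h
      exact hz (by rwa [sub_eq_zero.1 h])
    have hA : ∀ m, Sk (k + 1) m z = Lint μ (DQ z (S (m + (k + 1))) * (Q k * ρ)) := by
      intro m
      rw [hSkS, Lint_apply]
      refine setIntegral_congr_fun measurableSet_Icc fun x hx => ?_
      simp only [DQ_eval z _ x, mul_div_cancel_left₀ _ (hxz x hx), eval_mul]
      rfl
    have h1 : DQ z (ρ * S (n + (k + 1))) =
        C (ρ.eval z) * DQ z (S (n + (k + 1))) + S (n + (k + 1)) * DQ z ρ := by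
      refine eq_of_infinite_eval_eq _ _ (Set.Infinite.mono ?_ (Set.Ioi_infinite z))
      intro x hx
      have hne : z - x ≠ 0 := sub_ne_zero.2 (ne_of_lt hx)
      refine mul_left_cancel₀ hne ?_
      have e1 := DQ_eval z ρ x
      have e2 := DQ_eval z (S (n + (k + 1))) x
      rw [← DQ_eval]
      simp only [eval_mul, eval_add, eval_C]
      linear_combination (ρ.eval z) * e2 + (S (n + (k + 1))).eval x * e1
    have h2 : Lint μ (S (n + (k + 1)) * DQ z ρ * (Q k * ρ)) = 0 := by
      by_cases hD0 : D = 0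
      · have : DQ z ρ = 0 := by
          rw [DQ, divByMonic_eq_zero_iff (monic_X_sub_C z), degree_X_sub_C]
          exact hdeg _ 1 (by omega)
        simp [this]
      · have e : S (n + (k + 1)) * DQ z ρ * (Q k * ρ) =
            S (n + (k + 1)) * (ρ * (DQ z ρ * Q k)) := by ring
        rw [e, hρ, ← sob_rho μ c d hc η, sob_comm]
        refine sob_orth μ c d η _ _ _ (hSorth _) (hdeg _ _ ?_)
        have a1 := natDegree_mul_le (p := ρ) (q := DQ z ρ * Q k)
        have a2 := natDegree_mul_le (p := DQ z ρ) (q := Q k)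
        have a3 : (DQ z ρ).natDegree = ρ.natDegree - 1 := by
          rw [DQ, natDegree_divByMonic _ (monic_X_sub_C z), natDegree_X_sub_C]
        rw [hQdeg] at a2
        rw [← hρ]
        omega
    have hlin : ∀ (s : Finset ℕ) (a : ℕ → ℝ) (f : ℕ → Polynomial ℝ),
        DQ z (∑ j ∈ s, a j • f j) = ∑ j ∈ s, a j • DQ z (f j) := by
      intro s a f
      refine eq_of_infinite_eval_eq _ _ (Set.Infinite.mono ?_ (Set.Ioi_infinite z))
      intro x hx
      have hne : z - x ≠ 0 := sub_ne_zero.2 (ne_of_lt hx)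
      refine mul_left_cancel₀ hne ?_
      rw [← DQ_eval]
      simp only [eval_finsetSum, eval_smul, smul_eq_mul, Finset.mul_sum,
        ← Finset.sum_sub_distrib]
      refine Finset.sum_congr rfl fun j _ => ?_
      linear_combination a j * DQ_eval z (f j) x
    have h3 : Lint μ (DQ z (ρ * S (n + (k + 1))) * (Q k * ρ)) = ρ.eval z * Sk (k + 1) n z := by
      rw [h1, add_mul, map_add, h2, add_zero, hA, ← smul_eq_C_mul, smul_mul_assoc, map_smul,
        smul_eq_mul]
    rw [← h3, hexp, hlin, Finset.sum_mul, map_sum]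
    refine Finset.sum_congr rfl fun j _ => ?_
    rw [hA, smul_mul_assoc, map_smul, smul_eq_mul]


end
end

section
/- Let L be a polynomial with real coefficients of degree at least m ∈ ℕ, let Δ_0, Δ_1, …, Δ_m be intervals of the real line, and set I_k = conv(Δ_0 ∪ ⋯ ∪ Δ_k) for k = 0,…,m. If I_{k−1} ∩ Δ_k = ∅ for every k = 1,…,m, then Σ_{i=0}^{m} N₀(L^{(i)}; Δ_i) ≤ N₀(L^{(m)}; I_m) + m ≤ deg L, where N₀(f; A) denotes the total number of zeros, counted with multiplicity, of the polynomial f in the set A ⊂ ℝ, and L^{(i)} is the ith derivative of L. -/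
open MeasureTheory Polynomial Filter
open scoped Classical

noncomputable section

lemma N0_rolle (p : Polynomial ℝ) (A : Set ℝ) (hA : A.OrdConnected) :
    N0 p A ≤ N0 (derivative p) A + 1 := by
  unfold N0
  rcases eq_or_ne (derivative p) 0 with hp' | hp'
  · rw [eq_C_of_derivative_eq_zero hp']
    simp
  have hp : p ≠ 0 := ne_of_apply_ne derivative (by rwa [derivative_zero])
  set R := p.roots.filter (fun x => x ∈ A) with hR
  set R' := (derivative p).roots.filter (fun x => x ∈ A) with hR'
  have hrolle : R.toFinset.card ≤ (R'.toFinset \ R.toFinset).card + 1 := by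
    refine Finset.card_le_sdiff_of_interleaved fun x hx y hy hxy hxy' => ?_
    rw [Multiset.mem_toFinset, hR, Multiset.mem_filter, mem_roots hp] at hx hy
    obtain ⟨z, hz1, hz2⟩ := exists_deriv_eq_zero hxy p.continuousOn (hx.1.trans hy.1.symm)
    refine ⟨z, ?_, hz1⟩
    rw [Multiset.mem_toFinset, hR', Multiset.mem_filter, mem_roots hp', IsRoot, ← p.deriv]
    exact ⟨hz2, hA.out hx.2 hy.2 ⟨hz1.1.le, hz1.2.le⟩⟩
  have hcount : ∀ x ∈ R.toFinset, R.count x ≤ R'.count x + 1 := by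
    intro x hx
    rw [Multiset.mem_toFinset, hR, Multiset.mem_filter] at hx
    rw [hR, hR', Multiset.count_filter_of_pos hx.2, Multiset.count_filter_of_pos hx.2,
      count_roots, count_roots]
    have := rootMultiplicity_sub_one_le_derivative_rootMultiplicity p x
    omega
  have h1 : R.card = ∑ x ∈ R.toFinset, R.count x := (Multiset.toFinset_sum_count_eq _).symm
  have h2 : R'.card = ∑ x ∈ R.toFinset, R'.count x
      + ∑ x ∈ R'.toFinset \ R.toFinset, R'.count x := by
    rw [← Finset.sum_union Finset.disjoint_sdiff, Finset.union_sdiff_self_eq_union,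
      ← Multiset.toFinset_sum_count_eq, ← Finset.sum_subset Finset.subset_union_right]
    intro x _ hx₂
    simpa only [Multiset.mem_toFinset, Multiset.count_eq_zero] using hx₂
  have h3 : (R'.toFinset \ R.toFinset).card ≤ ∑ x ∈ R'.toFinset \ R.toFinset, R'.count x := by
    rw [Finset.card_eq_sum_ones]
    refine Finset.sum_le_sum fun x hx => ?_
    rw [Nat.succ_le_iff, Multiset.count_pos, ← Multiset.mem_toFinset]
    exact (Finset.mem_sdiff.1 hx).1
  have h4 := Finset.sum_le_sum hcount
  rw [Finset.sum_add_distrib, ← Finset.card_eq_sum_ones] at h4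
  omega

lemma N0_disj (p : Polynomial ℝ) (A B C : Set ℝ) (hAB : A ∩ B = ∅) (hA : A ⊆ C) (hB : B ⊆ C) :
    N0 p A + N0 p B ≤ N0 p C := by
  unfold N0
  rw [← Multiset.card_add]
  apply Multiset.card_le_card
  rw [Multiset.filter_add_filter]
  have : (p.roots.filter (fun x => x ∈ A ∧ x ∈ B)) = 0 := by
    rw [Multiset.filter_eq_nil]
    intro x _ hx
    have : x ∈ A ∩ B := hx
    simp [hAB] at this
  rw [this, add_zero]
  apply Multiset.monotone_filter_right
  rintro x (h | h)
  · exact hA h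
  · exact hB h

lemma N0_main (L : Polynomial ℝ) (D : ℕ → Set ℝ) (k : ℕ)
    (h : ∀ j, 0 < j → j ≤ k → convexHull ℝ (⋃ i, ⋃ (_ : i < j), D i) ∩ D j = ∅) :
    ∑ i ∈ Finset.range (k + 1), N0 (derivative^[i] L) (D i)
      ≤ N0 (derivative^[k] L) (convexHull ℝ (⋃ i, ⋃ (_ : i < k + 1), D i)) + k := by
  have hsub : ∀ j, D j ⊆ convexHull ℝ (⋃ i, ⋃ (_ : i < j + 1), D i) := fun j x hx =>
    subset_convexHull ℝ _ (Set.mem_iUnion₂.2 ⟨j, Nat.lt_succ_self j, hx⟩)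
  induction k with
  | zero =>
    have := N0_disj L ∅ (D 0) (convexHull ℝ (⋃ i, ⋃ (_ : i < 0 + 1), D i)) (by simp) (by simp)
      (hsub 0)
    simp at this ⊢
    omega
  | succ k ih =>
    rw [Finset.sum_range_succ]
    have h1 := ih fun j hj hjk => h j hj (by omega)
    have h2 := N0_rolle (derivative^[k] L) (convexHull ℝ (⋃ i, ⋃ (_ : i < k + 1), D i))
      (convex_convexHull ℝ _).ordConnected
    rw [← Function.iterate_succ_apply' derivative, Nat.succ_eq_add_one] at h2
    have h3 := N0_disj (derivative^[k + 1] L) _ _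
      (convexHull ℝ (⋃ i, ⋃ (_ : i < k + 1 + 1), D i)) (h (k + 1) (by omega) le_rfl)
      (convexHull_mono (Set.iUnion₂_subset fun i hi =>
        Set.subset_iUnion₂_of_subset i (Nat.lt_succ_of_lt hi) subset_rfl))
      (hsub (k + 1))
    omega

/-- Lemma on zero counting: if the intervals `Δ 0, …, Δ m` satisfy
`conv(Δ 0 ∪ ⋯ ∪ Δ (k-1)) ∩ Δ k = ∅` for `k = 1, …, m`, then
`∑_{i=0}^m N₀(L^{(i)}; Δ i) ≤ N₀(L^{(m)}; I m) + m ≤ deg L`. -/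
theorem statement8
    (m : ℕ) (L : Polynomial ℝ) (hL : (m : WithBot ℕ) ≤ L.degree)
    (Δ : Fin (m + 1) → Set ℝ) (hΔ : ∀ i, (Δ i).OrdConnected)
    (hsep : ∀ k : Fin (m + 1), 0 < (k : ℕ) →
      (convexHull ℝ (⋃ i ∈ {i : Fin (m + 1) | i < k}, Δ i)) ∩ Δ k = ∅) :
    (∑ i : Fin (m + 1), N0 (derivative^[(i : ℕ)] L) (Δ i))
        ≤ N0 (derivative^[m] L) (convexHull ℝ (⋃ i, Δ i)) + m ∧
      N0 (derivative^[m] L) (convexHull ℝ (⋃ i, Δ i)) + m ≤ L.natDegree := by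
  have hnd : m ≤ L.natDegree := by
    have hL0 : L ≠ 0 := by
      rintro rfl
      simp at hL
    rw [degree_eq_natDegree hL0] at hL
    exact_mod_cast hL
  constructor
  · let D : ℕ → Set ℝ := fun i => if h : i < m + 1 then Δ ⟨i, h⟩ else ∅
    have hD : ∀ i : Fin (m + 1), D i = Δ i := fun i => dif_pos i.isLt
    have hU : ∀ k, k ≤ m + 1 → (⋃ i, ⋃ (_ : i < k), D i)
        = ⋃ i ∈ {i : Fin (m + 1) | (i : ℕ) < k}, Δ i := by
      intro k hk
      ext x
      simp only [Set.mem_iUnion, Set.mem_ofPred_eq]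
      constructor
      · rintro ⟨i, hi, hx⟩
        refine ⟨⟨i, by omega⟩, hi, ?_⟩
        rw [← hD]
        exact hx
      · rintro ⟨i, hi, hx⟩
        exact ⟨i, hi, by rwa [hD]⟩
    have key := N0_main L D m (fun j hj hjm => by
      have := hsep ⟨j, by omega⟩ hj
      rw [hU j (by omega)]
      have e := hD ⟨j, by omega⟩
      simp only at e
      rw [e]
      exact this)
    rw [hU _ le_rfl, Finset.sum_range] at key
    simp only [hD] at key
    have e : (⋃ i ∈ {i : Fin (m + 1) | (i : ℕ) < m + 1}, Δ i) = ⋃ i, Δ i := by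
      ext x
      simp only [Set.mem_iUnion, Set.mem_ofPred_eq]
      exact ⟨fun ⟨i, _, h⟩ => ⟨i, h⟩, fun ⟨i, h⟩ => ⟨i, i.isLt, h⟩⟩
    rwa [e] at key
  · have h1 : N0 (derivative^[m] L) (convexHull ℝ (⋃ i, Δ i)) ≤ (derivative^[m] L).natDegree :=
      (Multiset.card_le_card (Multiset.filter_le _ _)).trans (card_roots' _)
    have h2 := natDegree_iterate_derivative L m
    omega

end
end

section
/- Let {(r_i, ν_i)}_{i=1}^{M} ⊂ ℝ × ℤ≥0 be a sequentially-ordered finite sequence of ordered pairs, i.e., 0 ≤ ν_1 ≤ ⋯ ≤ ν_M and r_k ∉ conv{r_1,…,r_{k−1}} for k = 1,…,M. Then there exists a unique monic polynomial U_M of minimal degree such that U_M^{(ν_i)}(r_i) = 0 for i = 1,…,M; moreover, deg U_M = κ_M, where κ_M = (min 𝕴_M) − 1 and 𝕴_M = {i : 1 ≤ i ≤ M and ν_i ≥ i} ∪ {M+1}. -/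
open MeasureTheory Polynomial Filter
open scoped Classical

noncomputable section

theorem aux_rolle (f : Polynomial ℝ) (S : Finset ℝ) : (∀ x ∈ S, f.eval x = 0) →
    ∃ T : Finset ℝ, S.card ≤ T.card + 1 ∧ ∀ t ∈ T, (derivative f).eval t = 0 ∧
      ∃ a ∈ S, ∃ b ∈ S, a < t ∧ t < b := by
  induction S using Finset.induction_on_max with
  | empty => intro _; exact ⟨∅, by simp⟩
  | insert x S hx ih =>
    intro h
    obtain ⟨T, hT, hT'⟩ := ih (fun y hy => h y (Finset.mem_insert_of_mem hy))
    have hxS : x ∉ S := fun hh => lt_irrefl _ (hx x hh)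
    rcases S.eq_empty_or_nonempty with rfl | hne
    · exact ⟨∅, by simp⟩
    · have hm := S.max'_mem hne
      obtain ⟨t, ht, ht'⟩ := exists_deriv_eq_zero (f := fun y => f.eval y) (hx _ hm)
        f.continuous.continuousOn
        ((h _ (Finset.mem_insert_of_mem hm)).trans (h x (Finset.mem_insert_self _ _)).symm)
      rw [Polynomial.deriv] at ht'
      have htT : t ∉ T := by
        intro hh
        obtain ⟨_, a, ha, b, hb, h1, h2⟩ := hT' t hh
        have := S.le_max' b hb
        linarith [ht.1]
      refine ⟨insert t T, ?_, ?_⟩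
      · rw [Finset.card_insert_of_notMem htT, Finset.card_insert_of_notMem hxS]; omega
      · intro u hu
        rcases Finset.mem_insert.1 hu with rfl | hu
        · exact ⟨ht', _, Finset.mem_insert_of_mem hm, x, Finset.mem_insert_self _ _, ht.1, ht.2⟩
        · obtain ⟨h0, a, ha, b, hb, h1, h2⟩ := hT' u hu
          exact ⟨h0, a, Finset.mem_insert_of_mem ha, b, Finset.mem_insert_of_mem hb, h1, h2⟩

theorem aux_rolle_iter (f : Polynomial ℝ) (K : Set ℝ) (hK : Convex ℝ K) (S : Finset ℝ)
    (hS : ∀ x ∈ S, x ∈ K ∧ f.eval x = 0) (k : ℕ) :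
    ∃ T : Finset ℝ, S.card ≤ T.card + k ∧
      ∀ t ∈ T, t ∈ K ∧ (derivative^[k] f).eval t = 0 := by
  induction k with
  | zero => exact ⟨S, by simp, by simpa using hS⟩
  | succ k ih =>
    obtain ⟨T, h1, h2⟩ := ih
    obtain ⟨T', h3, h4⟩ := aux_rolle (derivative^[k] f) T (fun x hx => (h2 x hx).2)
    refine ⟨T', by omega, fun t ht => ?_⟩
    obtain ⟨h5, a, ha, b, hb, h6, h7⟩ := h4 t ht
    refine ⟨hK.ordConnected.out (h2 a ha).1 (h2 b hb).1 ⟨h6.le, h7.le⟩, ?_⟩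
    rw [Function.iterate_succ_apply']; exact h5

theorem aux_zeros (r : ℕ → ℝ) (ν : ℕ → ℕ) (f : Polynomial ℝ) (n : ℕ)
    (hν : ∀ i, i + 1 < n → ν i ≤ ν (i + 1))
    (hr : ∀ k < n, r k ∉ convexHull ℝ (r '' {j | j < k}))
    (hf : ∀ i < n, (derivative^[ν i] f).eval (r i) = 0) (i : ℕ) : i < n → ν i ≤ i →
    ∃ S : Finset ℝ, i + 1 ≤ S.card + ν i ∧
      ∀ x ∈ S, x ∈ convexHull ℝ (r '' {j | j < i + 1}) ∧ (derivative^[ν i] f).eval x = 0 := by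
  have self : ∀ i, r i ∈ convexHull ℝ (r '' {j | j < i + 1}) := fun i =>
    subset_convexHull ℝ _ ⟨i, by simp, rfl⟩
  have key : ∀ i, i < n → 
    ∃ S : Finset ℝ, i + 1 ≤ S.card + ν i ∧
      ∀ x ∈ S, x ∈ convexHull ℝ (r '' {j | j < i + 1}) ∧ (derivative^[ν i] f).eval x = 0 := by
    intro i
    induction i with
    | zero =>
      intro h
      refine ⟨{r 0}, by simp, ?_⟩
      intro x hx
      rw [Finset.mem_singleton] at hx
      subst hx
      exact ⟨self 0, hf 0 h⟩
    | succ i ih =>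
      intro h
      obtain ⟨S, h1, h2⟩ := ih (by omega)
      obtain ⟨T, h3, h4⟩ := aux_rolle_iter _ _ (convex_convexHull ℝ _) S h2 (ν (i+1) - ν i)
      have hle := hν i h
      rw [← Function.iterate_add_apply, Nat.sub_add_cancel hle] at h4
      have hn : r (i+1) ∉ T := fun hh => hr (i+1) h (h4 _ hh).1
      refine ⟨insert (r (i+1)) T, ?_, ?_⟩
      · rw [Finset.card_insert_of_notMem hn]; omega
      · intro x hx
        rcases Finset.mem_insert.1 hx with rfl | hx
        · exact ⟨self _, hf _ h⟩
        · refine ⟨convexHull_mono (Set.image_mono ?_) (h4 x hx).1, (h4 x hx).2⟩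
          intro j hj
          simp only [Set.mem_setOf_eq] at hj ⊢
          omega
  intro h _
  exact key i h

theorem aux_unique (r : ℕ → ℝ) (ν : ℕ → ℕ) (f : Polynomial ℝ) (n : ℕ) :
    (∀ i, i + 1 < n → ν i ≤ ν (i + 1)) →
    (∀ k < n, r k ∉ convexHull ℝ (r '' {j | j < k})) →
    (∀ i < n, (derivative^[ν i] f).eval (r i) = 0) → (∀ i < n, ν i ≤ i) →
    f.degree < n → f = 0 := by
  induction n with
  | zero => intro _ _ _ _ h; simpa using h
  | succ n ih =>
    intro hν hr hf hi hd
    obtain ⟨S, h1, h2⟩ := aux_zeros r ν f (n+1) hν hr hf n (by omega) (hi n (by omega))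
    refine ih (fun i h => hν i (by omega)) (fun i h => hr i (by omega)) (fun i h => hf i (by omega))
      (fun i h => hi i (by omega)) ?_
    have hz : derivative^[ν n] f = 0 := by
      by_contra hne
      have hc : S.card ≤ (derivative^[ν n] f).natDegree :=
        Polynomial.card_le_degree_of_subset_roots (p := derivative^[ν n] f) (Z := S) (by
          intro x hx
          rw [Polynomial.mem_roots hne]
          exact (h2 x hx).2)
      have h3 := Polynomial.natDegree_iterate_derivative f (ν n)
      have h4 : f ≠ 0 := by rintro rfl; simp at hne
      have h5 := (Polynomial.natDegree_lt_iff_degree_lt h4).2 hd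
      have := hi n (by omega)
      omega
    rw [Polynomial.degree_lt_iff_coeff_zero]
    intro m hm
    have := congrArg (fun p => p.coeff (m - ν n)) hz
    have hnn := hi n (by omega)
    simp only [Polynomial.coeff_iterate_derivative, coeff_zero, nsmul_eq_mul] at this
    rw [Nat.sub_add_cancel (by omega)] at this
    rcases mul_eq_zero.1 this with h | h
    · exfalso
      have h' : m.descFactorial (ν n) = 0 := by exact_mod_cast h
      rw [Nat.descFactorial_eq_zero_iff_lt] at h'
      omega
    · exact h

theorem aux_exists (r : ℕ → ℝ) (ν : ℕ → ℕ) (n : ℕ)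
    (hν : ∀ i, i + 1 < n → ν i ≤ ν (i + 1))
    (hr : ∀ k < n, r k ∉ convexHull ℝ (r '' {j | j < k}))
    (hi : ∀ i < n, ν i ≤ i) :
    ∃ U : Polynomial ℝ, U.Monic ∧ U.natDegree = n ∧
      ∀ i < n, (derivative^[ν i] U).eval (r i) = 0 := by
  let L : Polynomial.degreeLT ℝ n →ₗ[ℝ] (Fin n → ℝ) :=
    LinearMap.pi (fun i : Fin n =>
      ((Polynomial.leval (r i)).comp ((derivative : Polynomial ℝ →ₗ[ℝ] Polynomial ℝ) ^ (ν i))).comp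
        (Polynomial.degreeLT ℝ n).subtype)
  have hL : ∀ p i, L p i = (derivative^[ν i] (p : Polynomial ℝ)).eval (r i) := by
    intro p i
    simp [L, Module.End.pow_apply]
  have inj : Function.Injective L := by
    rw [← LinearMap.ker_eq_bot, LinearMap.ker_eq_bot']
    intro p hp
    apply Subtype.ext
    refine aux_unique r ν p n hν hr ?_ hi (Polynomial.mem_degreeLT.1 p.2)
    intro i h
    have := hL p ⟨i, h⟩
    rw [hp] at this
    simpa using this.symm
  let e := Polynomial.degreeLTEquiv ℝ n
  have surj : Function.Surjective L := by
    have h1 : Function.Injective (L ∘ₗ e.symm.toLinearMap) := inj.comp e.symm.injective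
    have h2 := LinearMap.injective_iff_surjective.1 h1
    intro y
    obtain ⟨x, hx⟩ := h2 y
    exact ⟨e.symm x, hx⟩
  obtain ⟨Q, hQ⟩ := surj (fun i => (derivative^[ν i] (X ^ n : Polynomial ℝ)).eval (r i))
  have hd := Polynomial.mem_degreeLT.1 Q.2
  refine ⟨X ^ n - (Q : Polynomial ℝ), Polynomial.monic_X_pow_sub hd, ?_, ?_⟩
  · apply Polynomial.natDegree_eq_of_degree_eq_some
    rw [Polynomial.degree_sub_eq_left_of_degree_lt] <;> simp [hd]
  · intro i h
    have h1 := hL Q ⟨i, h⟩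
    rw [hQ] at h1
    rw [Polynomial.iterate_derivative_sub, Polynomial.eval_sub, sub_eq_zero]
    exact h1

/-- For a sequentially-ordered sequence `{(r i, ν i)}`, there is a
unique monic polynomial `U` of minimal degree with `U^{(ν i)}(r i) = 0` for all `i`,
and `deg U = κ_M`. -/
theorem statement9
    (M : ℕ) (r : Fin M → ℝ) (ν : Fin M → ℕ)
    (hν : ∀ i j : Fin M, i ≤ j → ν i ≤ ν j)
    (hr : ∀ k : Fin M, r k ∉ convexHull ℝ (r '' {j : Fin M | j < k})) :
    ∃ U : Polynomial ℝ,
      (U.Monic ∧ ∀ i, (derivative^[ν i] U).eval (r i) = 0) ∧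
      (∀ V : Polynomial ℝ, V.Monic → (∀ i, (derivative^[ν i] V).eval (r i) = 0) →
        U.natDegree ≤ V.natDegree ∧ (V.natDegree = U.natDegree → V = U)) ∧
      U.natDegree = sInf ({M} ∪ {k : ℕ | ∃ i : Fin M, (i : ℕ) = k ∧ k < ν i}) := by
  set κ := sInf ({M} ∪ {k : ℕ | ∃ i : Fin M, (i : ℕ) = k ∧ k < ν i}) with hκ
  have hmem : κ ∈ ({M} ∪ {k : ℕ | ∃ i : Fin M, (i : ℕ) = k ∧ k < ν i} : Set ℕ) :=
    Nat.sInf_mem ⟨M, Or.inl rfl⟩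
  have hκM : κ ≤ M := Nat.sInf_le (Or.inl rfl)
  have hlow : ∀ i : Fin M, (i : ℕ) < κ → ν i ≤ i := by
    intro i h
    by_contra hh
    have : κ ≤ (i : ℕ) := Nat.sInf_le (Or.inr ⟨i, rfl, by omega⟩)
    omega
  have hhigh : ∀ i : Fin M, κ ≤ (i : ℕ) → κ < ν i := by
    intro i h
    rcases hmem with h1 | ⟨j, hj, h1⟩
    · have h1 : κ = M := h1
      have := i.2
      omega
    · have := hν j i (Fin.le_def.2 (by omega))
      omega
  let r' : ℕ → ℝ := fun k => if h : k < M then r ⟨k, h⟩ else 0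
  let ν' : ℕ → ℕ := fun k => if h : k < M then ν ⟨k, h⟩ else 0
  have er : ∀ k (h : k < M), r' k = r ⟨k, h⟩ := fun k h => dif_pos h
  have eν : ∀ k (h : k < M), ν' k = ν ⟨k, h⟩ := fun k h => dif_pos h
  have A : ∀ i, i + 1 < κ → ν' i ≤ ν' (i + 1) := by
    intro i h
    rw [eν i (by omega), eν (i+1) (by omega)]
    exact hν _ _ (Fin.le_def.2 (by simp))
  have B : ∀ k < κ, r' k ∉ convexHull ℝ (r' '' {j | j < k}) := by
    intro k h
    rw [er k (by omega)]
    intro hh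
    refine hr _ (convexHull_mono ?_ hh)
    rintro _ ⟨j, hj, rfl⟩
    have hj : j < k := hj
    exact ⟨⟨j, by omega⟩, Fin.lt_def.2 hj, (er j (by omega)).symm⟩
  have D : ∀ i < κ, ν' i ≤ i := by
    intro i h
    rw [eν i (by omega)]
    exact hlow ⟨i, by omega⟩ h
  have E : ∀ f : Polynomial ℝ, (∀ i, (derivative^[ν i] f).eval (r i) = 0) → f.degree < κ →
      f = 0 := by
    intro f hf hd
    refine aux_unique r' ν' f κ A B ?_ D hd
    intro i h
    rw [eν i (by omega), er i (by omega)]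
    exact hf _
  obtain ⟨U, hU, hUd, hU0⟩ := aux_exists r' ν' κ A B D
  have hUz : ∀ i, (derivative^[ν i] U).eval (r i) = 0 := by
    intro i
    rcases lt_or_ge (i : ℕ) κ with h | h
    · have := hU0 i h
      rwa [eν i i.2, er i i.2] at this
    · rw [Polynomial.iterate_derivative_eq_zero (by rw [hUd]; exact hhigh i h), eval_zero]
  refine ⟨U, ⟨hU, hUz⟩, ?_, hUd⟩
  intro V hV hVz
  constructor
  · by_contra hlt
    apply hV.ne_zero
    refine E V hVz ?_
    rw [← Polynomial.natDegree_lt_iff_degree_lt hV.ne_zero]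
    omega
  · intro hdeg
    rw [← sub_eq_zero]
    apply E
    · intro i
      rw [Polynomial.iterate_derivative_sub, Polynomial.eval_sub, hVz, hUz, sub_zero]
    · have h1 : V.degree = U.degree := by
        rw [Polynomial.degree_eq_natDegree hV.ne_zero, Polynomial.degree_eq_natDegree hU.ne_zero, hdeg]
      have := Polynomial.degree_sub_lt h1 hV.ne_zero (by rw [hV.leadingCoeff, hU.leadingCoeff])
      rwa [Polynomial.degree_eq_natDegree hV.ne_zero, hdeg, hUd] at this

end
end
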